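/- In Case (B) (s = −1), for every x ∈ ℤ₊ the limit P_*^{(O)}(x) = lim_{t→∞} P(X_{2t+1} = x) exists and is given by: P_*^{(O)}(x) = κ·((κ−2)/(κ−1))²·(1/(κ−1))^x for odd x, and P_*^{(O)}(x) = 0 for even x. -/

import Mathlib

open Filter Topology

noncomputable section

/-- Half-line quantum walk `Ψ_t(x) = (Ψ_t^L(x), Ψ_t^R(x))` with a reflecting wall at the
origin, coin parameters `a`, `b` and wall sign `s`:
`Ψ_0(0) = (1,0)`, `Ψ_0(x) = (0,0)` for `x ≥ 1`, and
`Ψ_{t+1}^L(x) = a·Ψ_t^L(x+1) − b·Ψ_t^R(x+1)`,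
`Ψ_{t+1}^R(x) = b·Ψ_t^L(x−1) + a·Ψ_t^R(x−1)` for `x ≥ 2`,
`Ψ_{t+1}^R(1) = s·Ψ_t^L(0)`, `Ψ_{t+1}^R(0) = 0`. -/
noncomputable def psi (a b s : ℝ) : ℕ → ℕ → ℂ × ℂ
  | 0, x => if x = 0 then (1, 0) else (0, 0)
  | t + 1, x =>
      ((a : ℂ) * (psi a b s t (x + 1)).1 - (b : ℂ) * (psi a b s t (x + 1)).2,
       if x = 0 then 0
       else if x = 1 then (s : ℂ) * (psi a b s t 0).1
       else (b : ℂ) * (psi a b s t (x - 1)).1 + (a : ℂ) * (psi a b s t (x - 1)).2)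

/-- Position distribution `P(X_t = x) = |Ψ_t^L(x)|² + |Ψ_t^R(x)|²`. -/
noncomputable def prob (a b s : ℝ) (t x : ℕ) : ℝ :=
  ‖(psi a b s t x).1‖ ^ 2 + ‖(psi a b s t x).2‖ ^ 2


open PowerSeries in
/-- Absolute summability of the coefficients. -/
def AbsSum (f : PowerSeries ℂ) : Prop := Summable fun n => ‖coeff n f‖

/-- The value of a power series at `1`. -/
def evOne (f : PowerSeries ℂ) : ℂ := ∑' n, PowerSeries.coeff n f

lemma AbsSum.mul {f g : PowerSeries ℂ} (hf : AbsSum f) (hg : AbsSum g) : AbsSum (f * g) := by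
  unfold AbsSum
  simp only [PowerSeries.coeff_mul]
  exact summable_norm_sum_mul_antidiagonal_of_summable_norm
    (f := fun n => PowerSeries.coeff n f) (g := fun n => PowerSeries.coeff n g) hf hg

lemma evOne_mul {f g : PowerSeries ℂ} (hf : AbsSum f) (hg : AbsSum g) :
    evOne (f * g) = evOne f * evOne g := by
  unfold evOne
  rw [tsum_mul_tsum_eq_tsum_sum_antidiagonal_of_summable_norm
    (f := fun n => PowerSeries.coeff n f) (g := fun n => PowerSeries.coeff n g) hf hg]
  simp only [PowerSeries.coeff_mul]

lemma AbsSum.add {f g : PowerSeries ℂ} (hf : AbsSum f) (hg : AbsSum g) : AbsSum (f + g) := by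
  refine Summable.of_nonneg_of_le (fun n => norm_nonneg _) (fun n => ?_) (Summable.add hf hg)
  rw [map_add]
  exact norm_add_le _ _

lemma evOne_add {f g : PowerSeries ℂ} (hf : AbsSum f) (hg : AbsSum g) :
    evOne (f + g) = evOne f + evOne g := by
  unfold evOne
  simp only [map_add]
  exact Summable.tsum_add hf.of_norm hg.of_norm

lemma absSum_C (c : ℂ) : AbsSum (PowerSeries.C c) := by
  refine summable_of_ne_finset_zero (s := {0}) (fun n hn => ?_)
  rw [PowerSeries.coeff_C]
  simp at hn
  simp [hn]

lemma evOne_C (c : ℂ) : evOne (PowerSeries.C c) = c := by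
  unfold evOne
  simp only [PowerSeries.coeff_C]
  simp

lemma absSum_X : AbsSum PowerSeries.X := by
  refine summable_of_ne_finset_zero (s := {1}) (fun n hn => ?_)
  rw [PowerSeries.coeff_X]
  simp at hn
  simp [hn]

lemma evOne_X : evOne PowerSeries.X = 1 := by
  unfold evOne
  simp only [PowerSeries.coeff_X]
  simp

lemma AbsSum.rescale {f : PowerSeries ℂ} (hf : AbsSum f) {η : ℂ} (hη : ‖η‖ = 1) :
    AbsSum (PowerSeries.rescale η f) := by
  unfold AbsSum at *
  simpa [PowerSeries.coeff_rescale, hη] using hf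

/-- Rescaled Catalan series. -/
def catK : PowerSeries ℂ :=
  PowerSeries.rescale (1 / 4 : ℂ) (PowerSeries.map (Nat.castRingHom ℂ) PowerSeries.catalanSeries)

lemma catK_coeff (n : ℕ) : PowerSeries.coeff n catK = (((catalan n : ℝ) / 4 ^ n : ℝ) : ℂ) := by
  simp [catK, PowerSeries.coeff_rescale]
  ring

lemma catK_eq : catK = 1 + PowerSeries.C (1 / 4) * PowerSeries.X * catK ^ 2 := by
  have h := congrArg (fun f => PowerSeries.rescale (1 / 4 : ℂ)
    (PowerSeries.map (Nat.castRingHom ℂ) f)) PowerSeries.catalanSeries_sq_mul_X_add_one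
  simp only [map_add, map_mul, map_pow, map_one, PowerSeries.map_X, PowerSeries.rescale_X] at h
  change catK ^ 2 * _ + 1 = catK at h
  linear_combination -h

lemma catK_absSum : AbsSum catK := by
  have hs : ∀ n : ℕ, (catalan n : ℝ) / 4 ^ n =
      2 * ((Nat.centralBinom n : ℝ) / 4 ^ n - (Nat.centralBinom (n + 1) : ℝ) / 4 ^ (n + 1)) := by
    intro n
    have h1 : ((n : ℝ) + 1) * Nat.centralBinom (n + 1) = 2 * (2 * n + 1) * Nat.centralBinom n := by
      exact_mod_cast Nat.succ_mul_centralBinom_succ n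
    have h2 : ((n : ℝ) + 1) * catalan n = Nat.centralBinom n := by
      exact_mod_cast succ_mul_catalan_eq_centralBinom n
    have h0 : ((n : ℝ) + 1) ≠ 0 := by positivity
    have h4 : (Nat.centralBinom (n + 1) : ℝ) = 2 * (2 * n + 1) * catalan n := by
      apply mul_left_cancel₀ h0
      rw [h1, ← h2]; ring
    rw [h4, ← h2]
    field_simp
    ring
  refine summable_of_sum_range_le (c := 2) (fun n => norm_nonneg _) (fun n => ?_)
  have : ∀ i, ‖PowerSeries.coeff i catK‖ = (catalan i : ℝ) / 4 ^ i := by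
    intro i
    rw [catK_coeff, Complex.norm_real, Real.norm_of_nonneg (by positivity)]
  simp only [this, hs]
  rw [← Finset.mul_sum, Finset.sum_range_sub' (fun n => (Nat.centralBinom n : ℝ) / 4 ^ n)]
  have : 0 ≤ (Nat.centralBinom n : ℝ) / 4 ^ n := by positivity
  simp
  exact this

/-- The series of `√(1 - X)`. -/
def sqB : PowerSeries ℂ := 1 + PowerSeries.C (-1 / 2) * (PowerSeries.X * catK)

lemma sqB_sq : sqB ^ 2 = 1 - PowerSeries.X := by
  have h := catK_eq
  have e1 : (PowerSeries.C (-1 / 2) : PowerSeries ℂ) * 2 = -1 := by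
    rw [show (2 : PowerSeries ℂ) = PowerSeries.C 2 from (map_ofNat _ 2).symm, ← map_mul]; norm_num
  have e2 : (PowerSeries.C (-1 / 2) : PowerSeries ℂ) ^ 2 = PowerSeries.C (1 / 4) := by
    rw [← map_pow]; norm_num
  unfold sqB
  linear_combination (-PowerSeries.X) * h + PowerSeries.X * catK * e1 +
    PowerSeries.X ^ 2 * catK ^ 2 * e2

lemma sqB_absSum : AbsSum sqB := by
  have := absSum_C 1
  rw [map_one] at this
  exact this.add ((absSum_C _).mul (absSum_X.mul catK_absSum))

lemma sqB_real (n : ℕ) : starRingEnd ℂ (PowerSeries.coeff n sqB) = PowerSeries.coeff n sqB := by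
  unfold sqB
  rcases n with _ | n
  · simp
  · rw [map_add, PowerSeries.coeff_C_mul, PowerSeries.coeff_succ_X_mul, catK_coeff,
      PowerSeries.coeff_one, map_add, map_mul, Complex.conj_ofReal,
      show (-1 / 2 : ℂ) = ((-1 / 2 : ℝ) : ℂ) by norm_num, Complex.conj_ofReal]
    simp

lemma sqB_const : PowerSeries.constantCoeff sqB = 1 := by
  simp [sqB]

lemma evOne_conj (η : ℂ) : evOne (PowerSeries.rescale (starRingEnd ℂ η) sqB) =
    starRingEnd ℂ (evOne (PowerSeries.rescale η sqB)) := by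
  unfold evOne
  rw [Complex.conj_tsum]
  simp only [PowerSeries.coeff_rescale, map_mul, map_pow, sqB_real]

lemma sqrtSeries (a b : ℝ) (hab : a ^ 2 + b ^ 2 = 1) (hb : 0 ≤ b) :
    ∃ S : PowerSeries ℂ, AbsSum S ∧ PowerSeries.constantCoeff S = 1 ∧
      S ^ 2 = (1 - PowerSeries.X ^ 2) ^ 2 + 4 * PowerSeries.C (b : ℂ) ^ 2 * PowerSeries.X ^ 2 ∧
      evOne S = 2 * b := by
  set η : ℂ := a + b * Complex.I with hη
  have hηc : starRingEnd ℂ η = a - b * Complex.I := by simp [hη]; ring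
  have habc : (a : ℂ) ^ 2 + (b : ℂ) ^ 2 = 1 := by exact_mod_cast hab
  have hp : η * starRingEnd ℂ η = 1 := by
    rw [hηc, hη]; linear_combination habc - b ^ 2 * Complex.I_sq
  have hq : η ^ 2 + (starRingEnd ℂ η) ^ 2 = 2 - 4 * b ^ 2 := by
    rw [hηc, hη]; linear_combination 2 * habc + 2 * b ^ 2 * Complex.I_sq
  have hn : ‖η‖ = 1 := by
    have := congrArg norm hp
    rw [norm_mul, Complex.norm_conj, norm_one] at this
    nlinarith [norm_nonneg η]
  have hn2 : ‖starRingEnd ℂ η‖ = 1 := by rw [Complex.norm_conj, hn]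
  have hn3 : ‖-η‖ = 1 := by rw [norm_neg, hn]
  have hn4 : ‖starRingEnd ℂ (-η)‖ = 1 := by rw [Complex.norm_conj, hn3]
  have s1 := sqB_absSum.rescale hn
  have s2 := sqB_absSum.rescale hn2
  have s3 := sqB_absSum.rescale hn3
  have s4 := sqB_absSum.rescale hn4
  have hr : ∀ ζ : ℂ, (PowerSeries.rescale ζ sqB) ^ 2 = 1 - PowerSeries.C ζ * PowerSeries.X := by
    intro ζ
    rw [← map_pow, sqB_sq, map_sub, map_one, PowerSeries.rescale_X]
  have hS2 : ((PowerSeries.rescale η sqB * PowerSeries.rescale (starRingEnd ℂ η) sqB) *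
      (PowerSeries.rescale (-η) sqB * PowerSeries.rescale (starRingEnd ℂ (-η)) sqB)) ^ 2 =
      (1 - PowerSeries.X ^ 2) ^ 2 + 4 * PowerSeries.C (b : ℂ) ^ 2 * PowerSeries.X ^ 2 := by
    rw [mul_pow, mul_pow, mul_pow, hr, hr, hr, hr]
    have hp' := congrArg (PowerSeries.C (R := ℂ)) hp
    have hq' := congrArg (PowerSeries.C (R := ℂ)) hq
    simp only [map_mul, map_add, map_sub, map_pow, map_one, map_ofNat] at hp' hq'
    simp only [map_neg]
    linear_combination (-PowerSeries.X ^ 2) * hq' + (PowerSeries.X ^ 4) *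
      (PowerSeries.C η * PowerSeries.C (starRingEnd ℂ η) + 1) * hp'
  refine ⟨_, (s1.mul s2).mul (s3.mul s4), ?_, hS2, ?_⟩
  · have : ∀ ζ : ℂ, PowerSeries.constantCoeff (PowerSeries.rescale ζ sqB) = 1 := by
      intro ζ
      rw [← PowerSeries.coeff_zero_eq_constantCoeff_apply, PowerSeries.coeff_rescale]
      simp [sqB_const]
    simp only [map_mul, this]
    norm_num
  · have A := congrArg evOne hS2
    have hone : evOne 1 = 1 := by simpa using evOne_C 1
    have sone : AbsSum 1 := by simpa using absSum_C 1
    have e : (1 - PowerSeries.X ^ 2) ^ 2 + 4 * PowerSeries.C (b : ℂ) ^ 2 * PowerSeries.X ^ 2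
        = (1 + PowerSeries.C (-1) * (PowerSeries.X * PowerSeries.X)) *
          (1 + PowerSeries.C (-1) * (PowerSeries.X * PowerSeries.X)) +
          PowerSeries.C (4 * b ^ 2 : ℂ) * (PowerSeries.X * PowerSeries.X) := by
      simp only [map_mul, map_pow, map_neg, map_one, map_ofNat]
      ring
    have sX := absSum_X.mul absSum_X
    have sY := sone.add ((absSum_C (-1)).mul sX)
    rw [e, evOne_add (sY.mul sY) ((absSum_C _).mul sX), evOne_mul sY sY,
      evOne_mul (absSum_C _) sX, evOne_add sone ((absSum_C (-1)).mul sX),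
      evOne_mul (absSum_C _) sX, evOne_mul absSum_X absSum_X, evOne_X, evOne_C, evOne_C, hone,
      pow_two, evOne_mul ((s1.mul s2).mul (s3.mul s4)) ((s1.mul s2).mul (s3.mul s4))] at A
    rw [evOne_mul (s1.mul s2) (s3.mul s4), evOne_mul s1 s2, evOne_mul s3 s4, evOne_conj,
      evOne_conj, Complex.mul_conj, Complex.mul_conj] at A ⊢
    have hu := Complex.normSq_nonneg (evOne (PowerSeries.rescale η sqB))
    have hv := Complex.normSq_nonneg (evOne (PowerSeries.rescale (-η) sqB))
    generalize Complex.normSq (evOne (PowerSeries.rescale η sqB)) = u at *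
    generalize Complex.normSq (evOne (PowerSeries.rescale (-η) sqB)) = v at *
    have A' : u * v * (u * v) = (2 * b) * (2 * b) := by
      have : ((u * v * (u * v) : ℝ) : ℂ) = ((2 * b * (2 * b) : ℝ) : ℂ) := by
        push_cast
        linear_combination A
      exact_mod_cast this
    have := (mul_self_inj (mul_nonneg hu hv) (by positivity : (0 : ℝ) ≤ 2 * b)).1 A'
    exact_mod_cast this

lemma X_sq_cancel {f g : PowerSeries ℂ} (h : PowerSeries.X ^ 2 * f = PowerSeries.X ^ 2 * g) :
    f = g :=
  mul_left_cancel₀ (pow_ne_zero 2 PowerSeries.X_ne_zero) h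

/-- Generating functions of the walk. -/
lemma genFun (a b : ℝ) (hab : a ^ 2 + b ^ 2 = 1) (ha : a ≠ 0) (hb : 0 < b) :
    ∃ L R : ℕ → PowerSeries ℂ, 
      (∀ x, L x = (if x = 0 then 1 else 0) + PowerSeries.X *
        (PowerSeries.C (a : ℂ) * L (x + 1) - PowerSeries.C (b : ℂ) * R (x + 1))) ∧
      R 0 = 0 ∧ R 1 = - (PowerSeries.X * L 0) ∧
      (∀ x, R (x + 2) = PowerSeries.X *
        (PowerSeries.C (b : ℂ) * L (x + 1) + PowerSeries.C (a : ℂ) * R (x + 1))) ∧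
      ∃ G, AbsSum G ∧ evOne G = 2 * b / (b + 1) ∧ (1 - PowerSeries.X ^ 2) * L 0 = G := by
  obtain ⟨S, hS, hS0, hS2, hSe⟩ := sqrtSeries a b hab hb.le
  have hS1 : PowerSeries.coeff 1 S = 0 := by
    have := congrArg (PowerSeries.coeff 1) hS2
    have e : (1 - PowerSeries.X ^ 2) ^ 2 + 4 * PowerSeries.C (b : ℂ) ^ 2 * PowerSeries.X ^ 2 =
      1 + PowerSeries.X * (PowerSeries.X * (-2 + PowerSeries.X ^ 2
        + 4 * PowerSeries.C (b : ℂ) ^ 2)) := by ring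
    have e2 : ∀ f : PowerSeries ℂ, PowerSeries.coeff 1 (PowerSeries.X * (PowerSeries.X * f)) = 0 := by
      intro f
      have := PowerSeries.coeff_succ_X_mul 0 (PowerSeries.X * f)
      rw [PowerSeries.coeff_zero_X_mul] at this
      exact this
    rw [e, map_add, e2, PowerSeries.coeff_one, pow_two, PowerSeries.coeff_mul] at this
    simp [Finset.Nat.antidiagonal_succ, hS0] at this
    exact this
  have hbc : (b : ℂ) ≠ 0 := by exact_mod_cast hb.ne'
  have hac : (a : ℂ) ≠ 0 := by exact_mod_cast ha
  have hb1 : (b : ℂ) + 1 ≠ 0 := by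
    have : b + 1 ≠ 0 := by positivity
    exact_mod_cast this
  have hbi : PowerSeries.C (b : ℂ) * PowerSeries.C (1 / b : ℂ) = 1 := by
    rw [← map_mul, mul_one_div_cancel hbc, map_one]
  have hai : PowerSeries.C (a : ℂ) * PowerSeries.C (1 / a : ℂ) = 1 := by
    rw [← map_mul, mul_one_div_cancel hac, map_one]
  have h2i : (2 : PowerSeries ℂ) * PowerSeries.C (1 / 2 : ℂ) = 1 := by
    rw [show (2 : PowerSeries ℂ) = PowerSeries.C 2 from (map_ofNat _ 2).symm, ← map_mul]; norm_num
  have hb1i : (PowerSeries.C (b : ℂ) + 1) * PowerSeries.C (1 / (b + 1) : ℂ) = 1 := by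
    rw [← map_one PowerSeries.C, ← map_add, ← map_mul, mul_one_div_cancel hb1]
  have habC : PowerSeries.C (a : ℂ) ^ 2 + PowerSeries.C (b : ℂ) ^ 2 = 1 := by
    rw [← map_pow, ← map_pow, ← map_add, ← map_one PowerSeries.C]
    congr 1
    exact_mod_cast hab
  obtain ⟨h, hh⟩ : (PowerSeries.X : PowerSeries ℂ) ^ 2 ∣
      PowerSeries.C (1 / 2 : ℂ) * (PowerSeries.C (1 / b : ℂ) * (1 - PowerSeries.X ^ 2 - S)) := by
    rw [PowerSeries.X_pow_dvd_iff]
    intro m hm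
    rw [PowerSeries.coeff_C_mul, PowerSeries.coeff_C_mul]
    interval_cases m
    · simp [hS0]
    · simp [hS1, PowerSeries.coeff_X_pow, PowerSeries.coeff_one]
  obtain ⟨G, hG, hGe, hG2⟩ : ∃ G, AbsSum G ∧ evOne G = 2 * b / (b + 1) ∧
      2 * (PowerSeries.C (b : ℂ) + 1) * G =
        2 * PowerSeries.C (b : ℂ) + 1 - PowerSeries.X ^ 2 + S := by
    have sX := absSum_X.mul absSum_X
    have sZ := (absSum_C (2 * (b : ℂ) + 1)).add ((absSum_C (-1)).mul sX)
    have sY := sZ.add hS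
    refine ⟨_, (absSum_C (1 / 2)).mul ((absSum_C (1 / ((b : ℂ) + 1))).mul sY), ?_, ?_⟩
    · rw [evOne_mul (absSum_C _) ((absSum_C _).mul sY), evOne_mul (absSum_C _) sY,
        evOne_add sZ hS, evOne_add (absSum_C _) ((absSum_C (-1)).mul sX),
        evOne_mul (absSum_C _) sX, evOne_mul absSum_X absSum_X, evOne_X, evOne_C, evOne_C,
        evOne_C, evOne_C, hSe]
      field_simp
      ring
    · have e1 : PowerSeries.C (2 * (b : ℂ) + 1) = 2 * PowerSeries.C (b : ℂ) + 1 := by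
        rw [map_add, map_mul, map_one, map_ofNat]
      have e2 : PowerSeries.C (-1 : ℂ) = -1 := by rw [map_neg, map_one]
      rw [e1, e2]
      generalize PowerSeries.C (b : ℂ) = B at *
      generalize PowerSeries.C (1 / ((b : ℂ) + 1)) = Z at *
      generalize PowerSeries.C (1 / 2 : ℂ) = Y at *
      linear_combination ((2 * B + 1 - PowerSeries.X ^ 2 + S) * (B + 1) * Z) * h2i +
        (2 * B + 1 - PowerSeries.X ^ 2 + S) * hb1i
  generalize PowerSeries.C (b : ℂ) = B at *
  generalize PowerSeries.C (a : ℂ) = A at *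
  generalize PowerSeries.C (1 / a : ℂ) = Ai at *
  generalize PowerSeries.C (1 / b : ℂ) = Bi at *
  have hSh : S = 1 - PowerSeries.X ^ 2 - 2 * B * PowerSeries.X ^ 2 * h := by
    linear_combination (-2 * B) * hh + (B * Bi * (1 - PowerSeries.X ^ 2 - S)) * h2i +
      (1 - PowerSeries.X ^ 2 - S) * hbi
  have hq : h + B = PowerSeries.X ^ 2 * h * (B * h + 1) := by
    have h4C : (4 : PowerSeries ℂ) = PowerSeries.C 4 := (map_ofNat _ 4).symm
    have h4 : (4 : PowerSeries ℂ) * B ≠ 0 := by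
      refine mul_ne_zero (by rw [h4C]; simp) (left_ne_zero_of_mul_eq_one hbi)
    apply X_sq_cancel
    apply mul_left_cancel₀ h4
    rw [hSh] at hS2
    linear_combination -hS2
  set F := (1 + PowerSeries.X ^ 2 * h)⁻¹ with hF
  have hF1 : (1 + PowerSeries.X ^ 2 * h) * F = 1 := PowerSeries.mul_inv_cancel _ (by simp)
  clear_value F
  set r := Ai * (h + B) with hr
  set m := PowerSeries.X * (B * r + A) with hm
  have hArh : A * r - B = h := by rw [hr]; linear_combination (h + B) * hai
  have hrr : r = PowerSeries.X * (A * r - B) * m := by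
    rw [hArh, hm, hr]
    linear_combination Ai * hq - Ai * PowerSeries.X ^ 2 * h * habC
      + PowerSeries.X ^ 2 * h * A * hai
  refine ⟨fun x => match x with
    | 0 => F
    | x + 1 => r * (-(PowerSeries.X * F) * m ^ x),
    fun x => match x with
    | 0 => 0
    | x + 1 => -(PowerSeries.X * F) * m ^ x, ?_, rfl, ?_, ?_, ?_⟩
  · rintro (_ | x)
    · simp only [if_true, pow_zero]
      linear_combination hF1 + PowerSeries.X ^ 2 * F * hArh
    · simp only [Nat.add_eq_zero_iff, one_ne_zero, and_false, if_false]
      rw [pow_succ]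
      linear_combination (-(PowerSeries.X * F) * m ^ x) * hrr
  · simp
  · intro x
    simp only
    rw [pow_succ]
    nth_rewrite 2 [hm]
    ring
  · refine ⟨G, hG, hGe, ?_⟩
    have h2 : (2 : PowerSeries ℂ) * (B + 1) ≠ 0 :=
      mul_ne_zero (left_ne_zero_of_mul_eq_one h2i) (left_ne_zero_of_mul_eq_one hb1i)
    apply mul_left_cancel₀ h2
    linear_combination (-2 * PowerSeries.X ^ 2 * F) * hq +
      (2 * B + 1 - PowerSeries.X ^ 2 + (1 - PowerSeries.X ^ 2 - 2 * B * PowerSeries.X ^ 2 * h)) * hF1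
      - hG2 - hSh

lemma psi_eq_coeff (a b : ℝ) (L R : ℕ → PowerSeries ℂ)
    (h1 : ∀ x, L x = (if x = 0 then 1 else 0) + PowerSeries.X *
        (PowerSeries.C (a : ℂ) * L (x + 1) - PowerSeries.C (b : ℂ) * R (x + 1)))
    (h2 : R 0 = 0) (h3 : R 1 = - (PowerSeries.X * L 0))
    (h4 : ∀ x, R (x + 2) = PowerSeries.X *
        (PowerSeries.C (b : ℂ) * L (x + 1) + PowerSeries.C (a : ℂ) * R (x + 1))) (t : ℕ) :
    ∀ x, psi a b (-1) t x = (PowerSeries.coeff t (L x), PowerSeries.coeff t (R x)) := by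
  induction t with
  | zero =>
    intro x
    have e1 : PowerSeries.coeff 0 (L x) = if x = 0 then 1 else 0 := by
      rw [h1, map_add, PowerSeries.coeff_zero_X_mul]
      split_ifs <;> simp
    have e2 : PowerSeries.coeff 0 (R x) = 0 := by
      rcases x with _ | _ | x
      · simp [h2]
      · rw [h3, map_neg, PowerSeries.coeff_zero_X_mul, neg_zero]
      · rw [h4, PowerSeries.coeff_zero_X_mul]
    rw [e1, e2, psi]
    split_ifs <;> rfl
  | succ t ih =>
    intro x
    have e1 : PowerSeries.coeff (t + 1) (L x) = a * PowerSeries.coeff t (L (x + 1)) -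
        b * PowerSeries.coeff t (R (x + 1)) := by
      rw [h1, map_add, PowerSeries.coeff_succ_X_mul, map_sub, PowerSeries.coeff_C_mul,
        PowerSeries.coeff_C_mul]
      split_ifs <;> simp [PowerSeries.coeff_one]
    rw [psi, ih, e1]
    refine Prod.ext rfl ?_
    rcases x with _ | _ | x
    · simp [h2]
    · simp only [ih]
      rw [h3, map_neg, PowerSeries.coeff_succ_X_mul]
      simp
    · simp only [ih]
      rw [h4, PowerSeries.coeff_succ_X_mul, map_add, PowerSeries.coeff_C_mul,
        PowerSeries.coeff_C_mul]
      simp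

lemma psi_parity (a b s : ℝ) (t : ℕ) : ∀ x, Odd (t + x) → psi a b s t x = (0, 0) := by
  induction t with
  | zero =>
    intro x hx
    have : x ≠ 0 := by rintro rfl; simp at hx
    simp [psi, this]
  | succ t ih =>
    intro x hx
    rw [psi, ih (x + 1) (by convert hx using 1; ring)]
    rcases x with _ | _ | x
    · simp
    · simp [ih 0 (by rw [Nat.odd_iff] at *; omega)]
    · have := ih (x + 1) (by rw [Nat.odd_iff] at *; omega)
      simp [this]

lemma coeff_one_add_X (F G : PowerSeries ℂ) (h : (1 - PowerSeries.X ^ 2) * F = G) (n : ℕ) :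
    PowerSeries.coeff (n + 1) F + PowerSeries.coeff n F =
      ∑ j ∈ Finset.range (n + 2), PowerSeries.coeff j G := by
  have h' : F = G + PowerSeries.X * (PowerSeries.X * F) := by rw [← h]; ring
  induction n with
  | zero =>
    have e0 : PowerSeries.coeff 0 F = PowerSeries.coeff 0 G := by
      rw [h', map_add, PowerSeries.coeff_zero_X_mul, add_zero]
    have e1 : PowerSeries.coeff (0 + 1) F = PowerSeries.coeff (0 + 1) G := by
      rw [h', map_add, PowerSeries.coeff_succ_X_mul, PowerSeries.coeff_zero_X_mul, add_zero]
    rw [e0, e1, Finset.sum_range_succ, Finset.sum_range_one, add_comm]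
  | succ n ih =>
    rw [Finset.sum_range_succ, ← ih]
    have : PowerSeries.coeff (n + 1 + 1) F =
        PowerSeries.coeff (n + 1 + 1) G + PowerSeries.coeff n F := by
      conv_lhs => rw [h', map_add, PowerSeries.coeff_succ_X_mul, PowerSeries.coeff_succ_X_mul]
    rw [this]; ring

lemma psi_zero_lim (a b : ℝ) (hab : a ^ 2 + b ^ 2 = 1) (ha : a ≠ 0) (hb : 0 < b) :
    Tendsto (fun t : ℕ => (psi a b (-1) (2 * t) 0).1) atTop (𝓝 (2 * b / (b + 1))) := by
  obtain ⟨L, R, h1, h2, h3, h4, G, hG, hGe, hLG⟩ := genFun a b hab ha hb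
  have key := psi_eq_coeff a b L R h1 h2 h3 h4
  have hs := (hG.of_norm).hasSum.tendsto_sum_nat
  change Tendsto _ _ (𝓝 (evOne G)) at hs
  rw [hGe] at hs
  have : Tendsto (fun t : ℕ => 2 * t + 2) atTop atTop :=
    tendsto_atTop_mono (fun n => by simp only [id]; omega) tendsto_id
  refine (hs.comp this).congr (fun t => ?_)
  simp only [Function.comp]
  rw [← coeff_one_add_X (L 0) G hLG (2 * t)]
  have p := psi_parity a b (-1) (2 * t + 1) 0 ⟨t, by ring⟩
  rw [key] at p
  rw [key, (Prod.mk.inj p).1, zero_add]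

/-- Limits of both components at all positions. -/
lemma psi_lim (a b q : ℝ) (hab : a ^ 2 + b ^ 2 = 1) (ha : a ≠ 0) (hb : 0 < b)
    (hq : a * q = 1 - b) (x : ℕ) :
    Tendsto (fun t : ℕ => (psi a b (-1) (2 * t + (x + 1)) (x + 1)).1) atTop
      (𝓝 ((2 * b / (b + 1)) * q ^ (x + 1))) ∧
    Tendsto (fun t : ℕ => (psi a b (-1) (2 * t + (x + 1)) (x + 1)).2) atTop
      (𝓝 (-(2 * b / (b + 1)) * q ^ x)) := by
  have hac : (a : ℂ) ≠ 0 := by exact_mod_cast ha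
  have hqc : (a : ℂ) * q = 1 - b := by exact_mod_cast hq
  have habc : (a : ℂ) ^ 2 + (b : ℂ) ^ 2 = 1 := by exact_mod_cast hab
  have hq2 : (a : ℂ) - b * q = q := by
    apply mul_left_cancel₀ hac
    linear_combination habc - (1 + b) * hqc
  have hz := psi_zero_lim a b hab ha hb
  have hLrec : ∀ t x, (psi a b (-1) t (x + 1)).1 =
      ((psi a b (-1) (t + 1) x).1 + b * (psi a b (-1) t (x + 1)).2) / a := by
    intro t x
    rw [eq_div_iff hac, psi]
    ring
  generalize (2 * b / (b + 1) : ℂ) = c at *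
  induction x with
  | zero =>
    have hR : Tendsto (fun t : ℕ => (psi a b (-1) (2 * t + (0 + 1)) (0 + 1)).2) atTop
      (𝓝 (-c * q ^ 0)) := by
      have := hz.neg
      simp only [pow_zero, mul_one]
      refine this.congr (fun t => ?_)
      rw [show 2 * t + (0 + 1) = 2 * t + 1 from rfl, psi]
      simp
    refine ⟨?_, hR⟩
    have h := ((hz.comp (tendsto_add_atTop_nat 1)).add (hR.const_mul (b : ℂ))).div_const (a : ℂ)
    have e : (c + b * (-c * q ^ 0)) / a = c * (q : ℂ) ^ (0 + 1) := by
      rw [div_eq_iff hac]; linear_combination (-c) * hqc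
    rw [e] at h
    refine h.congr (fun t => ?_)
    rw [hLrec]
    rfl
  | succ x ih =>
    obtain ⟨ihL, ihR⟩ := ih
    have hR : Tendsto (fun t : ℕ => (psi a b (-1) (2 * t + (x + 1 + 1)) (x + 1 + 1)).2) atTop
      (𝓝 (-c * q ^ (x + 1))) := by
      have h := (ihL.const_mul (b : ℂ)).add (ihR.const_mul (a : ℂ))
      have e : b * (c * q ^ (x + 1)) + a * (-c * q ^ x) = -c * (q : ℂ) ^ (x + 1) := by
        linear_combination (-c) * q ^ x * hq2
      rw [e] at h
      refine h.congr (fun t => ?_)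
      rw [show 2 * t + (x + 1 + 1) = (2 * t + (x + 1)) + 1 from rfl, psi]
      simp
    refine ⟨?_, hR⟩
    have h := ((ihL.comp (tendsto_add_atTop_nat 1)).add (hR.const_mul (b : ℂ))).div_const (a : ℂ)
    have e : (c * q ^ (x + 1) + b * (-c * q ^ (x + 1))) / a = c * (q : ℂ) ^ (x + 1 + 1) := by
      rw [div_eq_iff hac]; linear_combination (-c) * q ^ (x + 1) * hqc
    rw [e] at h
    refine h.congr (fun t => ?_)
    rw [hLrec]
    simp only [Function.comp]
    rw [show 2 * (t + 1) + (x + 1) = 2 * t + (x + 1 + 1) + 1 by ring]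

/-- In Case (B) (`s = −1`), for every `x ∈ ℤ₊` the limit
`P_*^{(O)}(x) = lim_{t→∞} P(X_{2t+1} = x)` exists and equals
`κ·((κ−2)/(κ−1))²·(1/(κ−1))^x` for odd `x` and `0` for even `x`. -/
theorem half_line_caseB_odd_time_localization
    (κ : ℕ) (hκ : 3 ≤ κ) (a b : ℝ)
    (ha : a = 2 * Real.sqrt ((κ : ℝ) - 1) / κ) (hb : b = ((κ : ℝ) - 2) / κ)
    (x : ℕ) :
    Tendsto (fun t : ℕ => prob a b (-1) (2 * t + 1) x) atTop
      (𝓝 (if Odd x then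
          (κ : ℝ) * (((κ : ℝ) - 2) / ((κ : ℝ) - 1)) ^ 2 * (1 / ((κ : ℝ) - 1)) ^ x
        else 0)) := by
  have hk : (3 : ℝ) ≤ κ := by exact_mod_cast hκ
  have hk0 : (κ : ℝ) ≠ 0 := by positivity
  have hk1 : 0 < (κ : ℝ) - 1 := by linarith
  set w := Real.sqrt ((κ : ℝ) - 1) with hw
  have hw2 : w ^ 2 = (κ : ℝ) - 1 := Real.sq_sqrt hk1.le
  have hw0 : 0 < w := Real.sqrt_pos.2 hk1
  have hkw : (κ : ℝ) = w ^ 2 + 1 := by linarith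
  have hab : a ^ 2 + b ^ 2 = 1 := by
    rw [ha, hb, hkw]; field_simp; ring
  have ha0 : a ≠ 0 := by rw [ha]; positivity
  have hb0 : 0 < b := by
    rw [hb]; exact div_pos (by linarith) (by linarith)
  have hq : a * (1 / w) = 1 - b := by
    rw [ha, hb, hkw]; field_simp; ring
  split_ifs with hx
  · obtain ⟨m, rfl⟩ := hx
    obtain ⟨hL, hR⟩ := psi_lim a b (1 / w) hab ha0 hb0 hq (2 * m)
    have h := (hL.norm.pow 2).add (hR.norm.pow 2)
    rw [← tendsto_add_atTop_iff_nat m]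
    have hc : 2 * b / (b + 1) = ((κ : ℝ) - 2) / ((κ : ℝ) - 1) := by
      rw [div_eq_div_iff (by positivity) hk1.ne', hb]
      field_simp
      ring
    have n1 : ‖((2 * b / (b + 1)) * ((1 / w : ℝ) : ℂ) ^ (2 * m + 1) : ℂ)‖ ^ 2 =
        (((κ : ℝ) - 2) / ((κ : ℝ) - 1)) ^ 2 * (1 / ((κ : ℝ) - 1)) ^ (2 * m + 1) := by
      rw [← hc, ← hw2]
      rw [show ((2 * b / (b + 1)) * ((1 / w : ℝ) : ℂ) ^ (2 * m + 1) : ℂ) =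
        (((2 * b / (b + 1)) * (1 / w) ^ (2 * m + 1) : ℝ) : ℂ) by push_cast; rfl,
        Complex.norm_real, Real.norm_eq_abs, sq_abs, mul_pow, ← pow_mul, mul_comm _ 2, pow_mul,
        div_pow 1 w, one_pow]
    have n2 : ‖(-(2 * b / (b + 1)) * ((1 / w : ℝ) : ℂ) ^ (2 * m) : ℂ)‖ ^ 2 =
        (((κ : ℝ) - 2) / ((κ : ℝ) - 1)) ^ 2 * (1 / ((κ : ℝ) - 1)) ^ (2 * m) := by
      rw [← hc, ← hw2]
      rw [show (-(2 * b / (b + 1)) * ((1 / w : ℝ) : ℂ) ^ (2 * m) : ℂ) =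
        ((-(2 * b / (b + 1)) * (1 / w) ^ (2 * m) : ℝ) : ℂ) by push_cast; rfl,
        Complex.norm_real, Real.norm_eq_abs, sq_abs, mul_pow, neg_sq, ← pow_mul (1 / w),
        mul_comm _ 2, pow_mul (1 / w), div_pow 1 w, one_pow]
    rw [n1, n2] at h
    have e : (((κ : ℝ) - 2) / ((κ : ℝ) - 1)) ^ 2 * (1 / ((κ : ℝ) - 1)) ^ (2 * m + 1) +
        (((κ : ℝ) - 2) / ((κ : ℝ) - 1)) ^ 2 * (1 / ((κ : ℝ) - 1)) ^ (2 * m) =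
        (κ : ℝ) * (((κ : ℝ) - 2) / ((κ : ℝ) - 1)) ^ 2 * (1 / ((κ : ℝ) - 1)) ^ (2 * m + 1) := by
      have h1 : (1 / ((κ : ℝ) - 1)) ^ (2 * m) =
          ((κ : ℝ) - 1) * (1 / ((κ : ℝ) - 1)) ^ (2 * m + 1) := by
        rw [pow_succ]; field_simp
      rw [h1]; ring
    rw [e] at h
    refine h.congr (fun t => ?_)
    rw [prob, show 2 * (t + m) + 1 = 2 * t + (2 * m + 1) by ring]
  · refine tendsto_const_nhds.congr (fun t => ?_)
    rw [Nat.not_odd_iff_even] at hx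
    rw [prob, psi_parity a b (-1) (2 * t + 1) x (Odd.add_even ⟨t, rfl⟩ hx)]
    simp

end
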